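/- Fix c > 0 and define R_c(u,v) = Γ(c+u,v)/Γ(u,v) for u > 0 and v ≥ 0, where Γ(u,v) is the upper incomplete gamma function. Then the function (u,v) ↦ R_c(u,v) is strictly reverse-rule of order 2: for all u₁ > u₂ > 0 and v₁ > v₂ ≥ 0, the 2×2 determinant R_c(u₁,v₁)R_c(u₂,v₂) − R_c(u₁,v₂)R_c(u₂,v₁) is strictly negative. -/

import Mathlib

open MeasureTheory

/-- The upper incomplete gamma function `Γ(u,v) = ∫_v^∞ x^(u-1) e^(-x) dx`. -/
noncomputable def upperGamma (u v : ℝ) : ℝ :=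
  ∫ x in Set.Ioi v, x ^ (u - 1) * Real.exp (-x)

/-! Taking logarithms and differentiating in `v`, the claim follows once
`-∂/∂v log Γ(u,v) = v^(u-1) e^(-v) / Γ(u,v)`, the hazard rate of the gamma law, is strictly convex
in `u`: then its increment over `[u, u + c]` grows with `u`. With `v = e^a`, the substitution
`x = e^y` turns this hazard rate into a positive constant times `1 / M(u)`, where `M` is the moment
generating function of `y - a` under the strictly log-concave density `exp (-e^y)` on `(a, ∞)`.
Strict convexity of `1 / M` follows from `M M'' < 2 M'^2`, which is the classical moment inequality
`M₀ M₂ < 2 M₁^2` for the strictly log-concave tilted densities, the moments being taken about the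
left endpoint `a` of the support. -/

open Set Filter Real ProbabilityTheory
open scoped Topology

section Convexity

lemma strictConvexOn_add_lt_add {𝕜 : Type*} [Field 𝕜] [LinearOrder 𝕜] [IsStrictOrderedRing 𝕜]
    {s : Set 𝕜} {f : 𝕜 → 𝕜} (hf : StrictConvexOn 𝕜 s f) {x a b : 𝕜} (hx : x ∈ s)
    (hxab : x + a + b ∈ s) (ha : 0 < a) (hb : 0 < b) :
    f (x + a) + f (x + b) < f x + f (x + a + b) := by
  have below_chord_a := hf.secant_strict_mono_aux1 hx hxab (y := x + a) (by linarith) (by linarith)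
  have below_chord_b := hf.secant_strict_mono_aux1 hx hxab (y := x + b) (by linarith) (by linarith)
  have hab : 0 < a + b := add_pos ha hb
  refine lt_of_mul_lt_mul_left ?_ hab.le
  ring_nf at below_chord_a below_chord_b ⊢
  linarith

lemma strictConvexOn_const_mul {𝕜 E : Type*} [Field 𝕜] [LinearOrder 𝕜] [IsStrictOrderedRing 𝕜]
    [AddCommMonoid E] [Module 𝕜 E] {s : Set E} {f : E → 𝕜} (hf : StrictConvexOn 𝕜 s f) {r : 𝕜}
    (hr : 0 < r) : StrictConvexOn 𝕜 s (fun x ↦ r * f x) := by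
  refine ⟨hf.1, fun x hx y hy hxy p q hp hq hpq ↦ ?_⟩
  have hlt := mul_lt_mul_of_pos_left (hf.2 hx hy hxy hp hq hpq) hr
  simp only [smul_eq_mul] at hlt ⊢
  linarith

lemma strictConvexOn_inv_of_mul_lt_two_mul_sq {s : Set ℝ} {f f' f'' : ℝ → ℝ} (hs : IsOpen s)
    (hs' : Convex ℝ s) (hf : ∀ x ∈ s, HasDerivAt f (f' x) x)
    (hf' : ∀ x ∈ s, HasDerivAt f' (f'' x) x) (hpos : ∀ x ∈ s, 0 < f x)
    (hlt : ∀ x ∈ s, f x * f'' x < 2 * f' x ^ 2) :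
    StrictConvexOn ℝ s (fun x ↦ (f x)⁻¹) := by
  have hderiv : ∀ x ∈ s, HasDerivAt (fun x ↦ (f x)⁻¹) (-f' x / f x ^ 2) x :=
    fun x hx ↦ (hf x hx).fun_inv (hpos x hx).ne'
  refine strictConvexOn_of_deriv2_pos' hs'
    (fun x hx ↦ (hderiv x hx).continuousAt.continuousWithinAt) fun x hx ↦ ?_
  have hderiv_eq : deriv (fun x ↦ (f x)⁻¹) =ᶠ[𝓝 x] fun x ↦ -f' x / f x ^ 2 := by
    filter_upwards [hs.mem_nhds hx] with y hy using (hderiv y hy).deriv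
  have hpos_x := hpos x hx
  have hderiv2 : HasDerivAt (fun x ↦ -f' x / f x ^ 2)
      ((2 * f' x ^ 2 - f x * f'' x) / f x ^ 3) x := by
    refine ((hf' x hx).fun_neg.fun_div ((hf x hx).fun_pow 2) (by positivity)).congr_deriv ?_
    field_simp
    ring
  rw [Function.iterate_succ_apply, Function.iterate_one, hderiv_eq.deriv_eq, hderiv2.deriv]
  exact div_pos (sub_pos.2 (hlt x hx)) (by positivity)

end Convexity

section TailIntegrals

lemma setIntegral_pos_of_ae_pos {α : Type*} [MeasurableSpace α] {μ : Measure α} {s : Set α}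
    {f : α → ℝ} (hs : μ s ≠ 0) (hf : IntegrableOn f s μ) (hpos : ∀ᵐ x ∂μ.restrict s, 0 < f x) :
    0 < ∫ x in s, f x ∂μ := by
  rw [integral_pos_iff_support_of_nonneg_ae (hpos.mono fun x hx ↦ hx.le) hf]
  have hsupport : Function.support f =ᵐ[μ.restrict s] univ :=
    eventuallyEq_univ.2 (hpos.mono fun x hx ↦ hx.ne')
  rw [measure_congr hsupport, Measure.restrict_apply_univ]
  exact pos_iff_ne_zero.2 hs

lemma setIntegral_lt_setIntegral_of_ae_lt {α : Type*} [MeasurableSpace α] {μ : Measure α}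
    {s : Set α} {f g : α → ℝ} (hs : μ s ≠ 0) (hf : IntegrableOn f s μ) (hg : IntegrableOn g s μ)
    (hlt : ∀ᵐ x ∂μ.restrict s, f x < g x) : ∫ x in s, f x ∂μ < ∫ x in s, g x ∂μ := by
  rw [← sub_pos, ← integral_sub hg hf]
  exact setIntegral_pos_of_ae_pos hs (hg.sub hf) (hlt.mono fun x hx ↦ sub_pos.2 hx)

lemma integral_Ioi_eq_integral_Ioi_zero_add {E : Type*} [NormedAddCommGroup E] [NormedSpace ℝ E]
    (f : ℝ → E) (x : ℝ) : ∫ y in Ioi x, f y = ∫ t in Ioi 0, f (x + t) := by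
  rw [← (measurePreserving_add_left volume x).setIntegral_preimage_emb
    (measurableEmbedding_addLeft x), preimage_const_add_Ioi, sub_self]

lemma integrableOn_Ioi_zero_add_iff {E : Type*} [NormedAddCommGroup E] {f : ℝ → E} {x : ℝ} :
    IntegrableOn (fun t ↦ f (x + t)) (Ioi 0) ↔ IntegrableOn f (Ioi x) := by
  rw [← (measurePreserving_add_left volume x).integrableOn_comp_preimage
    (measurableEmbedding_addLeft x) (f := f), preimage_const_add_Ioi, sub_self, Function.comp_def]

variable {a : ℝ} {g : ℝ → ℝ}

lemma setIntegral_Ioi_indicator_Iio_pow_mul (n : ℕ) (r : ℝ) {y : ℝ} (hy : a ≤ y) :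
    ∫ x in Ioi a, (Iio y).indicator (fun x ↦ (x - a) ^ n * r) x =
      (y - a) ^ (n + 1) * r / (n + 1) := by
  rw [setIntegral_indicator measurableSet_Iio, Ioi_inter_Iio, ← integral_Ioc_eq_integral_Ioo,
    ← intervalIntegral.integral_of_le hy, intervalIntegral.integral_mul_const,
    intervalIntegral.integral_comp_sub_right (fun x ↦ x ^ n), integral_pow]
  simp only [sub_self, ne_eq, Nat.add_eq_zero_iff, one_ne_zero, and_false, not_false_eq_true,
    zero_pow, sub_zero]
  ring

lemma integrable_indicator_lt_pow_mul (n : ℕ) (hg : IntegrableOn g (Ioi a))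
    (hgn : IntegrableOn (fun y ↦ (y - a) ^ (n + 1) * g y) (Ioi a)) :
    Integrable ({p : ℝ × ℝ | p.1 < p.2}.indicator fun p ↦ (p.1 - a) ^ n * g p.2)
      ((volume.restrict (Ioi a)).prod (volume.restrict (Ioi a))) := by
  have hmeas : AEStronglyMeasurable
      ({p : ℝ × ℝ | p.1 < p.2}.indicator fun p ↦ (p.1 - a) ^ n * g p.2)
      ((volume.restrict (Ioi a)).prod (volume.restrict (Ioi a))) :=
    ((by fun_prop : Measurable fun p : ℝ × ℝ ↦ (p.1 - a) ^ n).aestronglyMeasurable.mul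
      hg.aestronglyMeasurable.comp_snd).indicator (measurableSet_lt measurable_fst measurable_snd)
  refine (integrable_prod_iff' hmeas).2 ⟨?_, ?_⟩
  · refine ae_of_all _ fun y ↦ ?_
    change IntegrableOn ((Iio y).indicator fun x ↦ (x - a) ^ n * g y) (Ioi a)
    rw [integrableOn_indicator_iff measurableSet_Iio, inter_comm, Ioi_inter_Iio]
    exact (Continuous.integrableOn_Icc (by fun_prop)).mono_set Ioo_subset_Icc_self
  · refine (hgn.norm.div_const (n + 1)).congr ?_
    filter_upwards [ae_restrict_mem measurableSet_Ioi] with y hy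
    have hnorm : ∀ x ∈ Ioi a, ‖{p : ℝ × ℝ | p.1 < p.2}.indicator
        (fun p ↦ (p.1 - a) ^ n * g p.2) (x, y)‖ =
          (Iio y).indicator (fun x ↦ (x - a) ^ n * ‖g y‖) x := by
      intro x hx
      change ‖(Iio y).indicator (fun x ↦ (x - a) ^ n * g y) x‖ = _
      rw [norm_indicator_eq_indicator_norm]
      simp only [norm_mul, norm_pow, Real.norm_of_nonneg (sub_nonneg.2 (le_of_lt hx)), indicator]
    rw [setIntegral_congr_fun measurableSet_Ioi hnorm,
      setIntegral_Ioi_indicator_Iio_pow_mul n _ (le_of_lt hy), norm_mul, norm_pow,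
      Real.norm_of_nonneg (sub_nonneg.2 (le_of_lt hy))]

lemma setIntegral_Ioi_indicator_Ioi_const_mul (r : ℝ) {x : ℝ} (hx : a ≤ x) :
    ∫ y in Ioi a, (Ioi x).indicator (fun y ↦ r * g y) y = r * ∫ y in Ioi x, g y := by
  rw [setIntegral_indicator measurableSet_Ioi, Ioi_inter_Ioi, sup_of_le_right hx,
    integral_const_mul]

lemma integrableOn_pow_mul_integral_Ioi (n : ℕ) (hg : IntegrableOn g (Ioi a))
    (hgn : IntegrableOn (fun y ↦ (y - a) ^ (n + 1) * g y) (Ioi a)) :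
    IntegrableOn (fun x ↦ (x - a) ^ n * ∫ y in Ioi x, g y) (Ioi a) := by
  refine (integrable_indicator_lt_pow_mul n hg hgn).integral_prod_left.congr ?_
  filter_upwards [ae_restrict_mem measurableSet_Ioi] with x hx
  exact setIntegral_Ioi_indicator_Ioi_const_mul (g := g) ((x - a) ^ n) (le_of_lt hx)

lemma integral_pow_mul_integral_Ioi (n : ℕ) (hg : IntegrableOn g (Ioi a))
    (hgn : IntegrableOn (fun y ↦ (y - a) ^ (n + 1) * g y) (Ioi a)) :
    ∫ x in Ioi a, (x - a) ^ n * ∫ y in Ioi x, g y =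
      (∫ y in Ioi a, (y - a) ^ (n + 1) * g y) / (n + 1) := by
  calc ∫ x in Ioi a, (x - a) ^ n * ∫ y in Ioi x, g y
    _ = ∫ x in Ioi a, ∫ y in Ioi a, (Ioi x).indicator (fun y ↦ (x - a) ^ n * g y) y :=
      setIntegral_congr_fun measurableSet_Ioi fun x hx ↦
        (setIntegral_Ioi_indicator_Ioi_const_mul _ (le_of_lt hx)).symm
    _ = ∫ y in Ioi a, ∫ x in Ioi a, (Iio y).indicator (fun x ↦ (x - a) ^ n * g y) x :=
      integral_integral_swap (integrable_indicator_lt_pow_mul n hg hgn)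
    _ = ∫ y in Ioi a, (y - a) ^ (n + 1) * g y / (n + 1) :=
      setIntegral_congr_fun measurableSet_Ioi fun y hy ↦
        setIntegral_Ioi_indicator_Iio_pow_mul n _ (le_of_lt hy)
    _ = (∫ y in Ioi a, (y - a) ^ (n + 1) * g y) / (n + 1) := integral_div _ _

end TailIntegrals

section LogConcave

variable {φ : ℝ → ℝ} {a : ℝ}

lemma strictAntiOn_integral_Ioi_div_exp (hφ : StrictConcaveOn ℝ (Ioi a) φ)
    (hint : IntegrableOn (fun y ↦ exp (φ y)) (Ioi a)) :
    StrictAntiOn (fun x ↦ (∫ y in Ioi x, exp (φ y)) / exp (φ x)) (Ioi a) := by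
  have htail : ∀ x, (∫ y in Ioi x, exp (φ y)) / exp (φ x) =
      ∫ t in Ioi 0, exp (φ (x + t) - φ x) := by
    intro x
    simp only [integral_Ioi_eq_integral_Ioi_zero_add _ x, exp_sub, integral_div]
  have hint_shift : ∀ x ∈ Ioi a, IntegrableOn (fun t ↦ exp (φ (x + t) - φ x)) (Ioi 0) := by
    intro x hx
    simp only [exp_sub]
    exact (integrableOn_Ioi_zero_add_iff.2
      (hint.mono_set (Ioi_subset_Ioi (le_of_lt hx)))).div_const (exp (φ x))
  intro x hx z hz hxz
  simp only [htail]
  refine setIntegral_lt_setIntegral_of_ae_lt (by simp) (hint_shift z hz) (hint_shift x hx) ?_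
  filter_upwards [ae_restrict_mem measurableSet_Ioi] with t ht
  have hzt : x + (z - x) + t ∈ Ioi a := by rw [mem_Ioi] at *; linarith
  have hincr := strictConvexOn_add_lt_add hφ.neg hx hzt (sub_pos.2 hxz) ht
  rw [exp_lt_exp]
  simp only [Pi.neg_apply, add_sub_cancel] at hincr
  linarith

-- Chebyshev's association inequality: `x - m` and the decreasing function `T / w` are negatively
-- correlated under the weight `w`, whose mean is `m`.
lemma setIntegral_sub_mul_neg_of_strictAntiOn_div {μ : Measure ℝ} [NullSingletonClass μ]
    {s : Set ℝ} (hs : MeasurableSet s) (hμs : μ s ≠ 0) {T w : ℝ → ℝ} {m : ℝ} (hm : m ∈ s)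
    (hw : ∀ x ∈ s, 0 < w x) (hanti : StrictAntiOn (fun x ↦ T x / w x) s)
    (hT : IntegrableOn (fun x ↦ (x - m) * T x) s μ)
    (hw_int : IntegrableOn (fun x ↦ (x - m) * w x) s μ)
    (hmean : ∫ x in s, (x - m) * w x ∂μ = 0) : ∫ x in s, (x - m) * T x ∂μ < 0 := by
  set r := T m / w m
  calc ∫ x in s, (x - m) * T x ∂μ
    _ < ∫ x in s, r * ((x - m) * w x) ∂μ := by
      refine setIntegral_lt_setIntegral_of_ae_lt hμs hT (hw_int.const_mul r) ?_
      filter_upwards [ae_restrict_mem hs, ae_restrict_of_ae (Measure.ae_ne μ m)] with x hx hne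
      have hT_eq : T x = T x / w x * w x := (div_mul_cancel₀ _ (hw x hx).ne').symm
      have hsign : (x - m) * (T x / w x - r) < 0 := by
        rcases hne.lt_or_gt with hlt | hgt
        · exact mul_neg_of_neg_of_pos (sub_neg.2 hlt) (sub_pos.2 (hanti hx hm hlt))
        · exact mul_neg_of_pos_of_neg (sub_pos.2 hgt) (sub_neg.2 (hanti hm hx hgt))
      rw [hT_eq]
      linarith [mul_neg_of_neg_of_pos hsign (hw x hx)]
    _ = 0 := by rw [integral_const_mul, hmean, mul_zero]

lemma integrableOn_sub_mul {μ : Measure ℝ} {s : Set ℝ} {f : ℝ → ℝ} {b c : ℝ}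
    (hf : IntegrableOn f s μ) (hbf : IntegrableOn (fun x ↦ (x - b) * f x) s μ) :
    IntegrableOn (fun x ↦ (x - c) * f x) s μ :=
  (hbf.sub (hf.const_mul (c - b))).congr (ae_of_all _ fun x ↦ by simp only [Pi.sub_apply]; ring)

lemma setIntegral_sub_mul {μ : Measure ℝ} {s : Set ℝ} {f : ℝ → ℝ} {b c : ℝ}
    (hf : IntegrableOn f s μ) (hbf : IntegrableOn (fun x ↦ (x - b) * f x) s μ) :
    ∫ x in s, (x - c) * f x ∂μ =
      ∫ x in s, (x - b) * f x ∂μ - (c - b) * ∫ x in s, f x ∂μ := by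
  rw [← integral_const_mul, ← integral_sub hbf (hf.const_mul _)]
  congr with x
  ring

lemma integral_Ioi_pow_mul_exp_pos {n : ℕ}
    (h : IntegrableOn (fun y ↦ (y - a) ^ n * exp (φ y)) (Ioi a)) :
    0 < ∫ y in Ioi a, (y - a) ^ n * exp (φ y) := by
  refine setIntegral_pos_of_ae_pos (by simp) h ?_
  filter_upwards [ae_restrict_mem measurableSet_Ioi] with y hy
  exact mul_pos (pow_pos (sub_pos.2 hy) n) (exp_pos (φ y))

-- For the tail `T` of `exp ∘ φ`, Fubini gives `∫ T = M₁` and `∫ (x - a) * T = M₂ / 2`, and `T` is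
-- the weight `exp ∘ φ` times a decreasing function, so its mean is below that of the weight:
-- `M₂ / (2 * M₁) < M₁ / M₀`.
lemma integral_mul_integral_sq_mul_lt_two_mul_sq (hφ : StrictConcaveOn ℝ (Ioi a) φ)
    (h : ∀ n ≤ 2, IntegrableOn (fun y ↦ (y - a) ^ n * exp (φ y)) (Ioi a)) :
    (∫ y in Ioi a, exp (φ y)) * ∫ y in Ioi a, (y - a) ^ 2 * exp (φ y) <
      2 * (∫ y in Ioi a, (y - a) * exp (φ y)) ^ 2 := by
  set T : ℝ → ℝ := fun x ↦ ∫ y in Ioi x, exp (φ y)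
  set M₀ := ∫ y in Ioi a, exp (φ y) with hM₀
  set M₁ := ∫ y in Ioi a, (y - a) * exp (φ y) with hM₁
  set M₂ := ∫ y in Ioi a, (y - a) ^ 2 * exp (φ y)
  have h₀ : IntegrableOn (fun y ↦ exp (φ y)) (Ioi a) := by simpa using h 0 (by norm_num)
  have h₁ : IntegrableOn (fun y ↦ (y - a) * exp (φ y)) (Ioi a) := by simpa using h 1 (by norm_num)
  have hM₀_pos : 0 < M₀ := by simpa using integral_Ioi_pow_mul_exp_pos (h 0 (by norm_num))
  have hM₁_pos : 0 < M₁ := by simpa using integral_Ioi_pow_mul_exp_pos (h 1 (by norm_num))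
  have hT₀ : IntegrableOn T (Ioi a) := by
    simpa using integrableOn_pow_mul_integral_Ioi 0 h₀ (h 1 (by norm_num))
  have hT₁ : IntegrableOn (fun x ↦ (x - a) * T x) (Ioi a) := by
    simpa using integrableOn_pow_mul_integral_Ioi 1 h₀ (h 2 le_rfl)
  have hT₀_eq : ∫ x in Ioi a, T x = M₁ := by
    simpa using integral_pow_mul_integral_Ioi 0 h₀ (h 1 (by norm_num))
  have hT₁_eq : ∫ x in Ioi a, (x - a) * T x = M₂ / 2 := by
    simpa [one_add_one_eq_two] using integral_pow_mul_integral_Ioi 1 h₀ (h 2 le_rfl)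
  set m := a + M₁ / M₀ with hm
  have hmean : ∫ x in Ioi a, (x - m) * exp (φ x) = 0 := by
    rw [setIntegral_sub_mul h₀ h₁, ← hM₁, ← hM₀, hm]
    field_simp
    ring
  have hcheb : ∫ x in Ioi a, (x - m) * T x < 0 :=
    setIntegral_sub_mul_neg_of_strictAntiOn_div measurableSet_Ioi (by simp)
      (lt_add_of_pos_right a (div_pos hM₁_pos hM₀_pos)) (fun x _ ↦ exp_pos (φ x))
      (strictAntiOn_integral_Ioi_div_exp hφ h₀) (integrableOn_sub_mul hT₀ hT₁)
      (integrableOn_sub_mul h₀ h₁) hmean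
  rw [setIntegral_sub_mul hT₀ hT₁, hT₀_eq, hT₁_eq, hm] at hcheb
  field_simp at hcheb
  linarith

end LogConcave

section ExpDensity

variable {φ : ℝ → ℝ} {a : ℝ}

/-- The measure on `(a, ∞)` with density `exp φ`, neither finite nor normalised in general. It is
log-concave when `φ` is concave, and its moment generating function collects all the exponential
tilts of `φ`. -/
noncomputable def expDensityIoi (φ : ℝ → ℝ) (a : ℝ) : Measure ℝ :=
  (volume.restrict (Ioi a)).withDensity fun y ↦ ENNReal.ofReal (exp (φ y))

lemma integrable_expDensityIoi_iff (hφ : AEMeasurable φ (volume.restrict (Ioi a))) {f : ℝ → ℝ} :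
    Integrable f (expDensityIoi φ a) ↔ IntegrableOn (fun y ↦ f y * exp (φ y)) (Ioi a) := by
  rw [expDensityIoi, integrable_withDensity_iff_integrable_smul₀' hφ.exp.ennreal_ofReal
    (ae_of_all _ fun _ ↦ ENNReal.ofReal_lt_top)]
  simp only [ENNReal.toReal_ofReal (exp_pos _).le, smul_eq_mul, mul_comm, IntegrableOn]

lemma integral_expDensityIoi (hφ : AEMeasurable φ (volume.restrict (Ioi a))) (f : ℝ → ℝ) :
    ∫ y, f y ∂expDensityIoi φ a = ∫ y in Ioi a, f y * exp (φ y) := by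
  rw [expDensityIoi, integral_withDensity_eq_integral_toReal_smul₀ hφ.exp.ennreal_ofReal
    (ae_of_all _ fun _ ↦ ENNReal.ofReal_lt_top)]
  simp only [ENNReal.toReal_ofReal (exp_pos _).le, smul_eq_mul, mul_comm]

lemma pow_mul_exp_mul_mul_exp (s x r : ℝ) (n : ℕ) :
    x ^ n * exp (s * x) * exp r = x ^ n * exp (s * x + r) := by
  rw [mul_assoc, exp_add]

lemma integral_pow_mul_exp_expDensityIoi (hφ : AEMeasurable φ (volume.restrict (Ioi a)))
    (s : ℝ) (n : ℕ) : ∫ y, (y - a) ^ n * exp (s * (y - a)) ∂expDensityIoi φ a =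
      ∫ y in Ioi a, (y - a) ^ n * exp (s * (y - a) + φ y) := by
  simp only [integral_expDensityIoi hφ, pow_mul_exp_mul_mul_exp]

lemma integrableOn_pow_mul_exp_of_mem_interior_integrableExpSet
    (hφ : AEMeasurable φ (volume.restrict (Ioi a))) {s : ℝ}
    (hs : s ∈ interior (integrableExpSet (· - a) (expDensityIoi φ a))) (n : ℕ) :
    IntegrableOn (fun y ↦ (y - a) ^ n * exp (s * (y - a) + φ y)) (Ioi a) := by
  have hint := integrable_pow_mul_exp_of_mem_interior_integrableExpSet hs n
  rw [integrable_expDensityIoi_iff hφ] at hint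
  simpa only [pow_mul_exp_mul_mul_exp] using hint

lemma strictConcaveOn_mul_sub_add {t : Set ℝ} (hφ : StrictConcaveOn ℝ t φ) (s b : ℝ) :
    StrictConcaveOn ℝ t fun y ↦ s * (y - b) + φ y := by
  have hlin : ConcaveOn ℝ t fun y ↦ s * (y - b) :=
    ⟨hφ.1, fun x _ y _ p q _ _ hpq ↦ by
      simp only [smul_eq_mul]; linear_combination (-s * b) * hpq⟩
  exact hlin.add_strictConcaveOn hφ

theorem strictConvexOn_inv_mgf_of_strictConcaveOn (hφ : StrictConcaveOn ℝ (Ioi a) φ) :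
    StrictConvexOn ℝ (interior (integrableExpSet (· - a) (expDensityIoi φ a)))
      (fun s ↦ (mgf (· - a) (expDensityIoi φ a) s)⁻¹) := by
  have hφ_meas : AEMeasurable φ (volume.restrict (Ioi a)) :=
    (hφ.concaveOn.continuousOn isOpen_Ioi).aemeasurable measurableSet_Ioi
  have hmgf : mgf (· - a) (expDensityIoi φ a) =
      fun s ↦ ∫ y, (y - a) ^ 0 * exp (s * (y - a)) ∂expDensityIoi φ a := by
    ext s
    simp only [mgf, pow_zero, one_mul]
  rw [hmgf]
  refine strictConvexOn_inv_of_mul_lt_two_mul_sq isOpen_interior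
    convex_integrableExpSet.interior (fun s hs ↦ hasDerivAt_integral_pow_mul_exp_real hs 0)
    (fun s hs ↦ hasDerivAt_integral_pow_mul_exp_real hs 1) (fun s hs ↦ ?_) fun s hs ↦ ?_
  · rw [integral_pow_mul_exp_expDensityIoi hφ_meas]
    exact integral_Ioi_pow_mul_exp_pos
      (integrableOn_pow_mul_exp_of_mem_interior_integrableExpSet hφ_meas hs 0)
  · simp only [integral_pow_mul_exp_expDensityIoi hφ_meas]
    simpa using integral_mul_integral_sq_mul_lt_two_mul_sq (strictConcaveOn_mul_sub_add hφ s a)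
      fun n _ ↦ integrableOn_pow_mul_exp_of_mem_interior_integrableExpSet hφ_meas hs n

end ExpDensity

section UpperGamma

variable {u v : ℝ}

lemma integrableOn_rpow_mul_exp_neg_Ioi (hu : 0 < u) (hv : 0 ≤ v) :
    IntegrableOn (fun x ↦ x ^ (u - 1) * exp (-x)) (Ioi v) := by
  simpa only [mul_comm] using (GammaIntegral_convergent hu).mono_set (Ioi_subset_Ioi hv)

lemma upperGamma_pos (hu : 0 < u) (hv : 0 ≤ v) : 0 < upperGamma u v := by
  refine setIntegral_pos_of_ae_pos (by simp) (integrableOn_rpow_mul_exp_neg_Ioi hu hv) ?_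
  filter_upwards [ae_restrict_mem measurableSet_Ioi] with x hx
  exact mul_pos (rpow_pos_of_pos (hv.trans_lt hx) _) (exp_pos _)

lemma continuousOn_upperGamma (hu : 0 < u) : ContinuousOn (upperGamma u) (Ici 0) :=
  (integrableOn_rpow_mul_exp_neg_Ioi hu le_rfl).continuousOn_Ici_primitive_Ioi

lemma hasDerivAt_upperGamma (hu : 0 < u) (hv : 0 < v) :
    HasDerivAt (upperGamma u) (-(v ^ (u - 1) * exp (-v))) v := by
  have hint := integrableOn_rpow_mul_exp_neg_Ioi hu le_rfl
  have hcont : ContinuousAt (fun x ↦ x ^ (u - 1) * exp (-x)) v :=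
    (continuousAt_rpow_const v (u - 1) (Or.inl hv.ne')).mul (by fun_prop)
  have hprimitive := intervalIntegral.integral_hasDerivAt_right
    ((intervalIntegrable_iff_integrableOn_Ioc_of_le hv.le).2 (hint.mono_set Ioc_subset_Ioi_self))
    ⟨Ioi 0, Ioi_mem_nhds hv, hint.aestronglyMeasurable⟩ hcont
  refine (hprimitive.const_sub (upperGamma u 0)).congr_of_eventuallyEq ?_
  filter_upwards [Ioi_mem_nhds hv] with y hy
  rw [eq_sub_iff_add_eq', ← eq_sub_iff_add_eq]
  exact (intervalIntegral.integral_Ioi_sub_Ioi hint (le_of_lt hy)).symm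

/-- The hazard rate at `v` of the gamma distribution with shape `u` and rate `1`: the density
`v ^ (u - 1) * exp (-v) / Γ(u)` divided by the survival function `upperGamma u v / Γ(u)`. It is
minus the logarithmic derivative of `upperGamma u` at `v`. -/
noncomputable def gammaHazard (u v : ℝ) : ℝ :=
  v ^ (u - 1) * exp (-v) / upperGamma u v

lemma hasDerivAt_log_upperGamma (hu : 0 < u) (hv : 0 < v) :
    HasDerivAt (fun v ↦ log (upperGamma u v)) (-gammaHazard u v) v := by
  simpa only [gammaHazard, neg_div] using
    (hasDerivAt_upperGamma hu hv).log (upperGamma_pos hu hv.le).ne'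

lemma exp_mul_sub_mul_exp_neg_exp (u a y : ℝ) :
    exp (u * (y - a)) * exp (-exp y) =
      exp (-(u * a)) * (exp y • (exp y ^ (u - 1) * exp (-exp y))) := by
  rw [smul_eq_mul, ← exp_mul]
  simp only [← exp_add]
  ring_nf

lemma mem_integrableExpSet_expDensityIoi_neg_exp (a : ℝ) (hu : 0 < u) :
    u ∈ integrableExpSet (· - a) (expDensityIoi (fun y ↦ -exp y) a) := by
  rw [integrableExpSet, mem_ofPred_eq, integrable_expDensityIoi_iff (by fun_prop)]
  simp only [exp_mul_sub_mul_exp_neg_exp]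
  exact ((integrableOn_comp_exp_Ioi _ a).2
    (integrableOn_rpow_mul_exp_neg_Ioi hu (exp_pos a).le)).const_mul _

lemma mgf_expDensityIoi_neg_exp (u a : ℝ) :
    mgf (· - a) (expDensityIoi (fun y ↦ -exp y) a) u =
      exp (-(u * a)) * upperGamma u (exp a) := by
  rw [mgf, integral_expDensityIoi (by fun_prop)]
  simp only [exp_mul_sub_mul_exp_neg_exp]
  rw [integral_const_mul, integral_comp_exp_Ioi (fun x ↦ x ^ (u - 1) * exp (-x)), upperGamma]

lemma gammaHazard_exp (u a : ℝ) :
    gammaHazard u (exp a) =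
      exp (-a - exp a) * (mgf (· - a) (expDensityIoi (fun y ↦ -exp y) a) u)⁻¹ := by
  rw [mgf_expDensityIoi_neg_exp, mul_inv, ← exp_neg, ← mul_assoc, gammaHazard, div_eq_mul_inv,
    ← exp_mul, ← exp_add, ← exp_add]
  ring_nf

theorem strictConvexOn_gammaHazard (hv : 0 < v) : StrictConvexOn ℝ (Ioi 0) (gammaHazard · v) := by
  obtain ⟨a, rfl⟩ : ∃ a, exp a = v := ⟨log v, exp_log hv⟩
  have hsubset : Ioi 0 ⊆ interior (integrableExpSet (· - a) (expDensityIoi (fun y ↦ -exp y) a)) :=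
    interior_maximal (fun u hu ↦ mem_integrableExpSet_expDensityIoi_neg_exp a hu) isOpen_Ioi
  have hconcave : StrictConcaveOn ℝ (Ioi a) fun y ↦ -exp y :=
    strictConvexOn_exp.neg.subset (subset_univ _) (convex_Ioi a)
  have hinv_mgf :=
    (strictConvexOn_inv_mgf_of_strictConcaveOn hconcave).subset hsubset (convex_Ioi 0)
  simpa only [gammaHazard_exp] using strictConvexOn_const_mul hinv_mgf (exp_pos (-a - exp a))

lemma gammaHazard_sub_lt_gammaHazard_sub {c u₁ u₂ : ℝ} (hc : 0 < c) (hu₂ : 0 < u₂) (hu : u₂ < u₁)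
    (hv : 0 < v) :
    gammaHazard (c + u₂) v - gammaHazard u₂ v < gammaHazard (c + u₁) v - gammaHazard u₁ v := by
  have hincr := strictConvexOn_add_lt_add (a := c) (b := u₁ - u₂)
    (strictConvexOn_gammaHazard hv) hu₂ (by rw [mem_Ioi]; linarith) hc (sub_pos.2 hu)
  simp only [add_sub_cancel, add_comm u₂ c] at hincr
  rw [show c + u₂ + (u₁ - u₂) = c + u₁ by ring] at hincr
  linarith

theorem strictAntiOn_log_upperGamma_sub {c u₁ u₂ : ℝ} (hc : 0 < c) (hu₂ : 0 < u₂)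
    (hu : u₂ < u₁) :
    StrictAntiOn (fun v ↦ log (upperGamma (c + u₁) v) - log (upperGamma u₁ v) -
      (log (upperGamma (c + u₂) v) - log (upperGamma u₂ v))) (Ici 0) := by
  have hu₁ : 0 < u₁ := hu₂.trans hu
  have hcont : ∀ u, 0 < u → ContinuousOn (fun v ↦ log (upperGamma u v)) (Ici 0) := fun u hu ↦
    (continuousOn_upperGamma hu).log fun v hv ↦ (upperGamma_pos hu hv).ne'
  refine strictAntiOn_of_deriv_neg (convex_Ici 0)
    (((hcont _ (add_pos hc hu₁)).sub (hcont _ hu₁)).sub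
      ((hcont _ (add_pos hc hu₂)).sub (hcont _ hu₂))) fun v hv ↦ ?_
  rw [interior_Ici] at hv
  have hderiv := ((hasDerivAt_log_upperGamma (add_pos hc hu₁) hv).sub
    (hasDerivAt_log_upperGamma hu₁ hv)).sub
    ((hasDerivAt_log_upperGamma (add_pos hc hu₂) hv).sub (hasDerivAt_log_upperGamma hu₂ hv))
  refine hderiv.deriv.trans_lt ?_
  linarith [gammaHazard_sub_lt_gammaHazard_sub hc hu₂ hu hv]

theorem strictAntiOn_upperGamma_ratio_div_ratio {c u₁ u₂ : ℝ} (hc : 0 < c) (hu₂ : 0 < u₂)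
    (hu : u₂ < u₁) :
    StrictAntiOn (fun v ↦ upperGamma (c + u₁) v / upperGamma u₁ v /
      (upperGamma (c + u₂) v / upperGamma u₂ v)) (Ici 0) := by
  refine (exp_strictMono.comp_strictAntiOn
    (strictAntiOn_log_upperGamma_sub hc hu₂ hu)).congr fun v hv ↦ ?_
  have hexp_log : ∀ u, 0 < u → exp (log (upperGamma u v)) = upperGamma u v :=
    fun u hu ↦ exp_log (upperGamma_pos hu hv)
  have hu₁ : 0 < u₁ := hu₂.trans hu
  simp only [Function.comp_apply, exp_sub, hexp_log, hu₁, hu₂, add_pos hc]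

end UpperGamma

/-- For fixed `c > 0`, the function `(u,v) ↦ R_c(u,v) = Γ(c+u,v)/Γ(u,v)`
is strictly reverse-rule of order 2: for `u₁ > u₂ > 0` and `v₁ > v₂ ≥ 0`,
`R_c(u₁,v₁)R_c(u₂,v₂) − R_c(u₁,v₂)R_c(u₂,v₁) < 0`. -/
theorem stmt_7 (c : ℝ) (hc : 0 < c) (u1 u2 v1 v2 : ℝ)
    (hu2 : 0 < u2) (hu : u2 < u1) (hv2 : 0 ≤ v2) (hv : v2 < v1) :
    upperGamma (c + u1) v1 / upperGamma u1 v1 *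
        (upperGamma (c + u2) v2 / upperGamma u2 v2) -
      upperGamma (c + u1) v2 / upperGamma u1 v2 *
        (upperGamma (c + u2) v1 / upperGamma u2 v1) < 0 := by
  have hratio_pos : ∀ v, 0 ≤ v → 0 < upperGamma (c + u2) v / upperGamma u2 v := fun v hv ↦
    div_pos (upperGamma_pos (add_pos hc hu2) hv) (upperGamma_pos hu2 hv)
  have hv1 : 0 ≤ v1 := hv2.trans hv.le
  rw [sub_neg, ← div_lt_div_iff₀ (hratio_pos v1 hv1) (hratio_pos v2 hv2)]
  exact strictAntiOn_upperGamma_ratio_div_ratio hc hu2 hu hv2 hv1 hv
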